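/- arXiv:1503.03895 — 6 statements merged into one kernel-verified Lean document; each statement's English description precedes it below -/
import Mathlib

section
/- Let (X,d) be a metric space, G a group acting on X by isometries, x₀ ∈ X, and let S, T be countable subsets of G. Assume the word map is injective, i.e. if s₁t₁⋯s_kt_k = s′₁t′₁⋯s′_{k′}t′_{k′} with all s_i, s′_i ∈ S and t_i, t′_i ∈ T, then k = k′, s_i = s′_i and t_i = t′_i for all i. Then for every δ > 0 one has, with all sums taken in [0,∞], Σ_{γ∈G} e^{−δ d(x₀, γ·x₀)} ≥ Σ_{k≥1} ( (Σ_{s∈S} e^{−δ d(x₀, s·x₀)}) · (Σ_{t∈T} e^{−δ d(x₀, t·x₀)}) )^k. In particular, if the product (Σ_{s∈S} e^{−δ d(x₀, s·x₀)})(Σ_{t∈T} e^{−δ d(x₀, t·x₀)}) ≥ 1, then Σ_{γ∈G} e^{−δ d(x₀, γ·x₀)} = +∞. -/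
open scoped ENNReal

theorem aux_tsum_pow {A : Type*} (w : A → ℝ≥0∞) (k : ℕ) :
    (∑' a, w a) ^ k = ∑' v : Fin k → A, ∏ i, w (v i) := by
  induction k with
  | zero => simp
  | succ k ih =>
    rw [pow_succ', ih, ← (Fin.consEquiv (fun _ : Fin (k+1) => A)).tsum_eq, ENNReal.tsum_prod',
      ← ENNReal.tsum_mul_right]
    refine tsum_congr fun a => ?_
    rw [← ENNReal.tsum_mul_left]
    refine tsum_congr fun v => ?_
    simp [Fin.prod_univ_succ, Fin.consEquiv]

theorem aux_tsum_list {A : Type*} (w : A → ℝ≥0∞) :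
    ∑' k : ℕ, (∑' a, w a) ^ k = ∑' l : List A, (l.map w).prod := by
  rw [← (List.equivSigmaTuple (α := A)).symm.tsum_eq, ENNReal.tsum_sigma']
  refine tsum_congr fun k => ?_
  rw [aux_tsum_pow]
  refine tsum_congr fun v => ?_
  simp [List.equivSigmaTuple, List.map_ofFn, List.prod_ofFn]

/-- Abstract lower bound for the Poincaré series of a group generated by
two families `S`, `T` with injective word map (Lemma 5.2 of the paper). -/
theorem stmt_0 {X : Type*} [MetricSpace X] {G : Type*} [Group G] [MulAction G X]
    (hisom : ∀ (g : G) (x y : X), dist (g • x) (g • y) = dist x y)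
    (x₀ : X) (S T : Set G) (hS : S.Countable) (hT : T.Countable)
    (hinj : ∀ l l' : List (G × G),
      (∀ p ∈ l, p.1 ∈ S ∧ p.2 ∈ T) → (∀ p ∈ l', p.1 ∈ S ∧ p.2 ∈ T) →
      (l.map fun p => p.1 * p.2).prod = (l'.map fun p => p.1 * p.2).prod → l = l')
    (δ : ℝ) (hδ : 0 < δ) :
    (∑' k : ℕ,
        ((∑' s : S, ENNReal.ofReal (Real.exp (-δ * dist x₀ ((s : G) • x₀)))) *
         (∑' t : T, ENNReal.ofReal (Real.exp (-δ * dist x₀ ((t : G) • x₀))))) ^ (k + 1))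
      ≤ ∑' γ : G, ENNReal.ofReal (Real.exp (-δ * dist x₀ (γ • x₀))) ∧
    (1 ≤ (∑' s : S, ENNReal.ofReal (Real.exp (-δ * dist x₀ ((s : G) • x₀)))) *
         (∑' t : T, ENNReal.ofReal (Real.exp (-δ * dist x₀ ((t : G) • x₀)))) →
      (∑' γ : G, ENNReal.ofReal (Real.exp (-δ * dist x₀ (γ • x₀)))) = ⊤) := by
  set f : G → ℝ≥0∞ := fun g => ENNReal.ofReal (Real.exp (-δ * dist x₀ (g • x₀))) with hf
  have hmul : ∀ g h : G, f g * f h ≤ f (g * h) := by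
    intro g h
    simp only [hf]
    rw [← ENNReal.ofReal_mul (Real.exp_nonneg _), ← Real.exp_add]
    apply ENNReal.ofReal_le_ofReal
    apply Real.exp_le_exp.mpr
    have h1 : dist x₀ ((g * h) • x₀) ≤ dist x₀ (g • x₀) + dist x₀ (h • x₀) := by
      rw [mul_smul, ← hisom g x₀ (h • x₀)]
      exact dist_triangle _ _ _
    nlinarith
  have hone : f 1 = 1 := by simp [hf]
  let w : S × T → ℝ≥0∞ := fun p => f p.1 * f p.2
  let φ : List (S × T) → G := fun l => (l.map fun p => (p.1 : G) * (p.2 : G)).prod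
  have hw : (∑' s : S, f s) * (∑' t : T, f t) = ∑' p, w p := by
    rw [ENNReal.tsum_prod', ← ENNReal.tsum_mul_right]
    refine tsum_congr fun a => ?_
    rw [← ENNReal.tsum_mul_left]
  have hφ : Function.Injective φ := by
    intro l l' h
    let e : S × T → G × G := fun p => (p.1, p.2)
    have he : Function.Injective e := by
      rintro ⟨a, b⟩ ⟨c, d⟩ h
      simpa [e, Subtype.ext_iff] using h
    apply he.list_map
    apply hinj
    · intro p hp
      obtain ⟨q, -, rfl⟩ := List.mem_map.mp hp
      exact ⟨q.1.2, q.2.2⟩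
    · intro p hp
      obtain ⟨q, -, rfl⟩ := List.mem_map.mp hp
      exact ⟨q.1.2, q.2.2⟩
    · simpa [φ, e, Function.comp_def] using h
  have hle : ∀ l, (l.map w).prod ≤ f (φ l) := by
    intro l
    induction l with
    | nil => simp [φ, hone]
    | cons p l ih =>
      have h2 : φ (p :: l) = ((p.1 : G) * p.2) * φ l := by simp [φ]
      rw [h2, List.map_cons, List.prod_cons]
      exact (mul_le_mul' (hmul _ _) ih).trans (hmul _ _)
  have main : ∑' k : ℕ, ((∑' s : S, f s) * (∑' t : T, f t)) ^ (k + 1) ≤ ∑' γ : G, f γ := by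
    rw [hw]
    calc ∑' k : ℕ, (∑' p, w p) ^ (k + 1) ≤ ∑' k : ℕ, (∑' p, w p) ^ k :=
          ENNReal.tsum_comp_le_tsum_of_injective (Nat.succ_injective)
            (fun k : ℕ => (∑' p, w p) ^ k)
      _ = ∑' l : List (S × T), (l.map w).prod := aux_tsum_list w
      _ ≤ ∑' l, f (φ l) := ENNReal.tsum_le_tsum hle
      _ ≤ _ := ENNReal.tsum_comp_le_tsum_of_injective hφ f
  refine ⟨main, fun h1 => ?_⟩
  rw [eq_top_iff]
  refine le_trans ?_ main
  calc (⊤ : ℝ≥0∞) = ∑' _ : ℕ, (1 : ℝ≥0∞) := (ENNReal.tsum_const_eq_top_of_ne_zero one_ne_zero).symm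
    _ ≤ _ := ENNReal.tsum_le_tsum fun k => one_le_pow₀ h1
end

section
/- Let (X,d) be a metric space, Γ a countable group acting on X by isometries, x₀ ∈ X, δ > 0, C ≥ 0, and let A, B be subsets of Γ. Assume that for every γ ∈ Γ there exist r ≥ 0, elements g₁,…,g_{r+1} ∈ A and p₁,…,p_r ∈ B such that γ = g₁p₁⋯g_r p_r g_{r+1} and d(x₀, γ·x₀) ≥ Σ_{i=1}^{r+1} d(x₀, g_i·x₀) + Σ_{i=1}^{r} d(x₀, p_i·x₀) − rC. Set S_A = Σ_{g∈A} e^{−δ d(x₀, g·x₀)} and S_B = Σ_{p∈B} e^{−δ d(x₀, p·x₀)} (values in [0,∞]). If S_A < ∞ and e^{Cδ} S_A S_B < 1, then Σ_{γ∈Γ} e^{−δ d(x₀, γ·x₀)} ≤ S_A / (1 − e^{Cδ} S_A S_B) < ∞. -/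
open scoped ENNReal

theorem aux_pow {ι : Type*} (h : ι → ℝ≥0∞) (r : ℕ) :
    ∑' x : Fin r → ι, ∏ i, h (x i) = (∑' i, h i) ^ r := by
  induction r with
  | zero => simp
  | succ n ih =>
    rw [← (Fin.consEquiv (fun _ : Fin (n + 1) => ι)).tsum_eq, ENNReal.tsum_prod']
    simp only [Fin.consEquiv_apply, Fin.prod_univ_succ, Fin.cons_zero, Fin.cons_succ]
    simp_rw [ENNReal.tsum_mul_left, ih, ENNReal.tsum_mul_right]
    rw [pow_succ']

/-- Abstract convergence criterion for a Poincaré series via a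
horospherical decomposition (engine of Theorem 1.2 of the paper). -/
theorem stmt_1 {X : Type*} [MetricSpace X] {Γ : Type*} [Group Γ] [Countable Γ] [MulAction Γ X]
    (hisom : ∀ (g : Γ) (x y : X), dist (g • x) (g • y) = dist x y)
    (x₀ : X) (δ C : ℝ) (hδ : 0 < δ) (hC : 0 ≤ C) (A B : Set Γ)
    (hdec : ∀ γ : Γ, ∃ (r : ℕ) (g : Fin (r + 1) → Γ) (p : Fin r → Γ),
      (∀ i, g i ∈ A) ∧ (∀ i, p i ∈ B) ∧
      γ = (List.ofFn fun i : Fin r => g i.castSucc * p i).prod * g (Fin.last r) ∧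
      (∑ i, dist x₀ (g i • x₀)) + (∑ i, dist x₀ (p i • x₀)) - r * C ≤ dist x₀ (γ • x₀))
    (SA SB : ℝ≥0∞)
    (hSA : SA = ∑' g : A, ENNReal.ofReal (Real.exp (-δ * dist x₀ ((g : Γ) • x₀))))
    (hSB : SB = ∑' p : B, ENNReal.ofReal (Real.exp (-δ * dist x₀ ((p : Γ) • x₀))))
    (hSAfin : SA < ⊤)
    (hsmall : ENNReal.ofReal (Real.exp (C * δ)) * SA * SB < 1) :
    (∑' γ : Γ, ENNReal.ofReal (Real.exp (-δ * dist x₀ (γ • x₀)))) ≤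
      SA / (1 - ENNReal.ofReal (Real.exp (C * δ)) * SA * SB) ∧
    (∑' γ : Γ, ENNReal.ofReal (Real.exp (-δ * dist x₀ (γ • x₀)))) < ⊤ := by
  have key : (∑' γ : Γ, ENNReal.ofReal (Real.exp (-δ * dist x₀ (γ • x₀)))) ≤
      SA / (1 - ENNReal.ofReal (Real.exp (C * δ)) * SA * SB) := by
    set f : Γ → ℝ≥0∞ := fun γ => ENNReal.ofReal (Real.exp (-δ * dist x₀ (γ • x₀))) with hf
    set K : ℝ≥0∞ := ENNReal.ofReal (Real.exp (C * δ)) with hK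
    let w : (Σ r : ℕ, (Fin r → A × B) × A) → ℝ≥0∞ := fun t =>
      (∏ i, (K * f (t.2.1 i).1 * f (t.2.1 i).2)) * f t.2.2
    let dcd : (Σ r : ℕ, (Fin r → A × B) × A) → Γ := fun t =>
      (List.ofFn fun i => ((t.2.1 i).1 : Γ) * (t.2.1 i).2).prod * t.2.2
    have hex : ∀ γ, ∃ t, dcd t = γ ∧ f γ ≤ w t := by
      intro γ
      obtain ⟨r, g, p, hg, hp, hγ, hle⟩ := hdec γ
      refine ⟨⟨r, fun i => (⟨g i.castSucc, hg _⟩, ⟨p i, hp i⟩), ⟨g (Fin.last r), hg _⟩⟩, hγ.symm, ?_⟩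
      simp only [w, hf, hK]
      have he : ∀ a b : ℝ, ENNReal.ofReal (Real.exp a) * ENNReal.ofReal (Real.exp b) =
          ENNReal.ofReal (Real.exp (a + b)) := fun a b => by
        rw [← ENNReal.ofReal_mul (Real.exp_pos _).le, ← Real.exp_add]
      simp only [he]
      rw [← ENNReal.ofReal_prod_of_nonneg
        (fun i _ => (Real.exp_pos _).le)]
      rw [← Real.exp_sum, he]
      apply ENNReal.ofReal_le_ofReal
      apply Real.exp_le_exp.2
      rw [Fin.sum_univ_castSucc] at hle
      simp only [Finset.sum_add_distrib, ← Finset.mul_sum, Finset.sum_const, Finset.card_univ,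
        Fintype.card_fin, nsmul_eq_mul]
      have := mul_le_mul_of_nonneg_left hle hδ.le
      linarith
    choose s hs hw using hex
    have hinj : Function.Injective s := fun a b h => by rw [← hs a, ← hs b, h]
    calc ∑' γ, f γ ≤ ∑' γ, w (s γ) := ENNReal.tsum_le_tsum hw
      _ ≤ ∑' t, w t := ENNReal.tsum_comp_le_tsum_of_injective hinj w
      _ = ∑' r : ℕ, (K * SA * SB) ^ r * SA := by
        rw [ENNReal.tsum_sigma']
        congr 1
        ext r
        change ∑' t : (Fin r → A × B) × A, (∏ i, (K * f (t.1 i).1 * f (t.1 i).2)) * f t.2 = _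
        rw [ENNReal.tsum_prod']
        simp_rw [ENNReal.tsum_mul_left, ENNReal.tsum_mul_right]
        rw [aux_pow (fun x : A × B => K * f x.1 * f x.2) r, ENNReal.tsum_prod', ← hSA]
        simp_rw [ENNReal.tsum_mul_left, ENNReal.tsum_mul_right, ENNReal.tsum_mul_left]
        rw [← hSA, ← hSB]
      _ = SA / (1 - K * SA * SB) := by
        rw [ENNReal.tsum_mul_right, ENNReal.tsum_geometric, mul_comm, div_eq_mul_inv]
  exact ⟨key, key.trans_lt (ENNReal.div_lt_top hSAfin.ne (tsub_pos_of_lt hsmall).ne')⟩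
end

section
/- Let μ be a Borel probability measure on ℝ with μ([0,∞)) = 1, let F(t) = μ([0,t]) and m(t) = ∫₀ᵗ (1 − F(s)) ds. Let κ ∈ (0,1) and let L be a slowly varying function, and assume that 1 − F(t) ~ L(t)/t^κ as t → ∞. Then t(1 − F(t))/m(t) → 1 − κ as t → ∞. -/
open MeasureTheory Filter

lemma aux_iter (r : ℝ → ℝ) (l T A B M : ℝ) (hl0 : 0 < l) (hl1 : l < 1) (hT : 0 < T)
    (hB0 : 0 ≤ B) (hB1 : B < 1)
    (hrec : ∀ t, T ≤ t → r t ≤ A + B * r (l * t))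
    (hM : ∀ t, l * T ≤ t → t ≤ T → r t ≤ M) (D : ℝ) (hD : A / (1 - B) < D) :
    ∀ᶠ t in atTop, r t ≤ D := by
  set C := A / (1 - B) with hC
  have hAC : A = C - B * C := by
    have : 1 - B ≠ 0 := by linarith
    rw [hC]; field_simp
  set K := max (M - C) 0 with hK
  have hK0 : 0 ≤ K := le_max_right _ _
  have h1 : ∀ n : ℕ, ∀ t, l * T ≤ t → l ^ n * t ≤ T → r t - C ≤ K := by
    intro n
    induction n with
    | zero =>
      intro t h1 h2
      have := hM t h1 (by simpa using h2)
      exact le_trans (by linarith) (le_max_left _ _)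
    | succ n ih =>
      intro t h1 h2
      rcases le_total t T with h | h
      · have := hM t h1 h
        exact le_trans (by linarith) (le_max_left _ _)
      · have h3 := ih (l * t) (by gcongr) (by rw [← mul_assoc, ← pow_succ]; exact h2)
        have h4 := hrec t h
        have h5 : B * (r (l * t) - C) ≤ B * K := by gcongr
        have h6 : B * K ≤ K := by nlinarith
        nlinarith
  have h2 : ∀ t, l * T ≤ t → r t - C ≤ K := by
    intro t ht
    have : Tendsto (fun n : ℕ => l ^ n * t) atTop (nhds (0 * t)) :=
      (tendsto_pow_atTop_nhds_zero_of_lt_one hl0.le hl1).mul_const t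
    rw [zero_mul] at this
    obtain ⟨n, hn⟩ := (this.eventually (gt_mem_nhds hT)).exists
    exact h1 n t ht hn.le
  have h3 : ∀ n : ℕ, ∀ t, T ≤ l ^ n * t → r t - C ≤ B ^ n * K := by
    intro n
    induction n with
    | zero =>
      intro t ht
      have := h2 t (by simp at ht; nlinarith)
      simpa using this
    | succ n ih =>
      intro t ht
      have h3 := ih (l * t) (by rw [← mul_assoc, ← pow_succ]; exact ht)
      have hp : 0 < l ^ (n+1) := by positivity
      have hp1 : l ^ (n+1) ≤ 1 := pow_le_one₀ hl0.le hl1.le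
      have ht0 : 0 < t := by
        by_contra hh
        push Not at hh
        nlinarith
      have h4 := hrec t (by nlinarith)
      have h5 : B * (r (l * t) - C) ≤ B * (B ^ n * K) := by gcongr
      rw [pow_succ]
      nlinarith
  have h4 : Tendsto (fun n : ℕ => B ^ n * K) atTop (nhds (0 * K)) :=
    (tendsto_pow_atTop_nhds_zero_of_lt_one hB0 hB1).mul_const K
  rw [zero_mul] at h4
  obtain ⟨n, hn⟩ := (h4.eventually (gt_mem_nhds (sub_pos.2 hD))).exists
  filter_upwards [eventually_ge_atTop (T / l ^ n)] with t ht
  have hp : 0 < l ^ n := by positivity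
  have := h3 n t (by rw [div_le_iff₀ hp] at ht; linarith)
  linarith

lemma aux_lim (k : ℝ) (hk1 : k < 1) :
    Tendsto (fun l : ℝ => (1 - l) / (1 - l ^ (1 - k))) (nhdsWithin 1 (Set.Iio 1))
      (nhds (1 / (1 - k))) := by
  have h : HasDerivAt (fun x : ℝ => x ^ (1 - k)) ((1 - k) * (1:ℝ) ^ (1 - k - 1)) 1 :=
    Real.hasDerivAt_rpow_const (Or.inl one_ne_zero)
  rw [Real.one_rpow, mul_one, hasDerivAt_iff_tendsto_slope] at h
  have h2 := (h.mono_left (nhdsWithin_mono (1:ℝ)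
    (show Set.Iio (1:ℝ) ⊆ {1}ᶜ from fun x hx => ne_of_lt hx))).inv₀ (by linarith)
  rw [one_div]
  refine h2.congr fun l => ?_
  rw [slope_def_field, Real.one_rpow, inv_div, ← neg_sub, ← neg_sub (1:ℝ) (l ^ (1-k)), neg_div_neg_eq]

theorem stmt_3 (μ : Measure ℝ) [IsProbabilityMeasure μ] (hμ : μ (Set.Ici 0) = 1)
    (F m : ℝ → ℝ)
    (hF : ∀ t, F t = (μ (Set.Icc 0 t)).toReal)
    (hm : ∀ t, m t = ∫ s in (0:ℝ)..t, (1 - F s))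
    (κ : ℝ) (hκ : κ ∈ Set.Ioo (0:ℝ) 1)
    (L : ℝ → ℝ) (hLpos : ∀ t > 0, 0 < L t) (hLmeas : Measurable L)
    (hLslow : ∀ lam > 0, Tendsto (fun t => L (lam * t) / L t) atTop (nhds 1))
    (htail : Tendsto (fun t => (1 - F t) / (L t / t ^ κ)) atTop (nhds 1)) :
    Tendsto (fun t => t * (1 - F t) / m t) atTop (nhds (1 - κ)) := by
  obtain ⟨hκ0, hκ1⟩ := hκ
  set G : ℝ → ℝ := fun t => 1 - F t with hG
  have hanti : Antitone G := by
    intro a b hab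
    simp only [hG, hF]
    have : (μ (Set.Icc 0 a)).toReal ≤ (μ (Set.Icc 0 b)).toReal :=
      ENNReal.toReal_mono (measure_ne_top _ _) (measure_mono (Set.Icc_subset_Icc_right hab))
    linarith
  have hG1 : ∀ t, G t ≤ 1 := by
    intro t
    simp only [hG, hF]
    have : 0 ≤ (μ (Set.Icc 0 t)).toReal := ENNReal.toReal_nonneg
    linarith
  have hGpos : ∀ t, 0 < G t := by
    intro t
    obtain ⟨s, hs1, hs2, hs3⟩ := ((htail.eventually (lt_mem_nhds (show (0:ℝ) < 1 by norm_num))).and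
      ((eventually_gt_atTop 0).and (eventually_ge_atTop t))).exists
    have hp : 0 < L s / s ^ κ := div_pos (hLpos s hs2) (Real.rpow_pos_of_pos hs2 _)
    have : 0 < G s := by
      have := (div_pos_iff_of_pos_right hp).1 hs1
      exact this
    exact this.trans_le (hanti hs3)
  have hint : ∀ a b : ℝ, IntervalIntegrable G volume a b := fun a b => hanti.intervalIntegrable
  have hmG : ∀ t, m t = ∫ s in (0:ℝ)..t, G s := hm
  have hdiff : ∀ a b, m b - m a = ∫ s in a..b, G s := by
    intro a b
    rw [hmG, hmG, intervalIntegral.integral_interval_sub_left (hint _ _) (hint _ _)]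
  have hup : ∀ a b, a ≤ b → m b - m a ≤ (b - a) * G a := by
    intro a b hab
    rw [hdiff]
    calc ∫ s in a..b, G s ≤ ∫ s in a..b, G a :=
          intervalIntegral.integral_mono_on hab (hint _ _) (by simp) (fun x hx => hanti hx.1)
      _ = _ := by simp
  have hlo : ∀ a b, a ≤ b → (b - a) * G b ≤ m b - m a := by
    intro a b hab
    rw [hdiff]
    calc (b - a) * G b = ∫ s in a..b, G b := by simp
      _ ≤ ∫ s in a..b, G s :=
          intervalIntegral.integral_mono_on hab (by simp) (hint _ _) (fun x hx => hanti hx.2)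
  have hm0 : m 0 = 0 := by rw [hmG]; simp
  have hmpos : ∀ t, 0 < t → 0 < m t := by
    intro t ht
    have := hlo 0 t ht.le
    have := mul_pos ht (hGpos t)
    rw [hm0] at *
    linarith
  have hmle : ∀ t, 0 < t → m t ≤ t := by
    intro t ht
    have := hup 0 t ht.le
    have := hG1 0
    rw [hm0] at *
    nlinarith
  have hq : ∀ l : ℝ, 0 < l → Tendsto (fun t => G (l * t) / G t) atTop (nhds (l ^ (-κ))) := by
    intro l hl
    have hlt : Tendsto (fun t : ℝ => l * t) atTop atTop := tendsto_id.const_mul_atTop hl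
    have h1 := (((htail.comp hlt).div htail one_ne_zero).mul (hLslow l hl)).mul_const (l ^ (-κ))
    simp only [div_one, one_mul] at h1
    refine h1.congr' ?_
    filter_upwards [eventually_gt_atTop 0] with t ht
    have a1 := hLpos t ht
    have a2 := hLpos (l * t) (mul_pos hl ht)
    have a3 := Real.rpow_pos_of_pos ht κ
    have a4 := Real.rpow_pos_of_pos hl κ
    have a5 := (hGpos t).ne'
    simp only [Function.comp, Pi.div_apply]
    change G (l * t) / (L (l * t) / (l * t) ^ κ) / (G t / (L t / t ^ κ)) * _ * _ = _
    rw [Real.mul_rpow hl.le ht.le, Real.rpow_neg hl.le]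
    field_simp
  set r : ℝ → ℝ := fun t => m t / (t * G t) with hr
  have hrpos : ∀ t, 0 < t → 0 < r t := fun t ht => div_pos (hmpos t ht) (mul_pos ht (hGpos t))
  have hrl : ∀ l t, 0 < l → 0 < t → m (l * t) / (t * G t) = l * (G (l * t) / G t) * r (l * t) := by
    intro l t hl ht
    have := (hGpos t).ne'
    have := (hGpos (l * t)).ne'
    simp only [hr]
    field_simp
  -- recursion
  have hrecU : ∀ l t, 0 < l → l < 1 → 0 < t →
      r t ≤ (1 - l) * (G (l * t) / G t) + l * (G (l * t) / G t) * r (l * t) := by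
    intro l t hl hl1 ht
    rw [← hrl l t hl ht]
    have h := hup (l * t) t (by nlinarith)
    have hp := mul_pos ht (hGpos t)
    have e : (1 - l) * (G (l * t) / G t) = ((t - l * t) * G (l * t)) / (t * G t) := by
      have := (hGpos t).ne'
      field_simp
    rw [e, ← add_div]
    simp only [hr]
    gcongr
    linarith
  have hrecL : ∀ l t, 0 < l → l < 1 → 0 < t →
      (1 - l) + l * (G (l * t) / G t) * r (l * t) ≤ r t := by
    intro l t hl hl1 ht
    rw [← hrl l t hl ht]
    have h := hlo (l * t) t (by nlinarith)
    have hp := mul_pos ht (hGpos t)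
    have e : (1 - l) = ((t - l * t) * G t) / (t * G t) := by
      have := (hGpos t).ne'
      field_simp
    rw [e, ← add_div]
    simp only [hr]
    gcongr
    linarith
  have hcont : Tendsto (fun k : ℝ => 1 / (1 - k)) (nhds κ) (nhds (1 / (1 - κ))) := by
    apply Tendsto.div tendsto_const_nhds (tendsto_const_nhds.sub tendsto_id)
    simp; linarith
  have hl0ev : ∀ᶠ l : ℝ in nhdsWithin 1 (Set.Iio 1), 0 < l ∧ l < 1 :=
    ((lt_mem_nhds one_pos).filter_mono nhdsWithin_le_nhds).and self_mem_nhdsWithin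
  have key : Tendsto r atTop (nhds (1 / (1 - κ))) := by
    rw [tendsto_order]
    constructor
    · intro D hD
      obtain ⟨D', hD1, hD2⟩ := exists_between hD
      obtain ⟨k, hkD, hk⟩ := (((hcont.mono_left nhdsWithin_le_nhds).eventually
        (lt_mem_nhds hD2)).and (self_mem_nhdsWithin : Set.Iio κ ∈ nhdsWithin κ (Set.Iio κ))).exists
      have hk : k < κ := hk
      have hk1 : k < 1 := hk.trans hκ1
      obtain ⟨l, hlD, hl0, hl1⟩ := (((aux_lim k hk1).eventually (lt_mem_nhds hkD)).and hl0ev).exists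
      have hlt : l ^ (-k) < l ^ (-κ) := Real.rpow_lt_rpow_of_exponent_gt hl0 hl1 (by linarith)
      obtain ⟨T, hT⟩ := eventually_atTop.1 (((hq l hl0).eventually (lt_mem_nhds hlt)).and
        (eventually_gt_atTop 0))
      have hT0 := (hT T le_rfl).2
      have hle : l * l ^ (-k) = l ^ (1 - k) := by
        rw [sub_eq_add_neg, Real.rpow_add hl0, Real.rpow_one]
      have hB0 : 0 ≤ l ^ (1 - k) := Real.rpow_nonneg hl0.le _
      have hB1 : l ^ (1 - k) < 1 := Real.rpow_lt_one hl0.le hl1 (by linarith)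
      have := aux_iter (fun t => - r t) l T (-(1 - l)) (l ^ (1 - k)) 0 hl0 hl1 hT0 hB0 hB1
        (by
          intro t ht
          have ht0 := (hT t ht).2
          have h1 := (hT t ht).1
          have h2 := hrecL l t hl0 hl1 ht0
          have h3 := (hrpos (l * t) (mul_pos hl0 ht0)).le
          have h4 : l * l ^ (-k) * r (l * t) ≤ l * (G (l * t) / G t) * r (l * t) := by gcongr
          rw [hle] at h4
          linarith)
        (by
          intro t ht _
          have := hrpos t (lt_of_lt_of_le (mul_pos hl0 hT0) ht)
          linarith) (-D') (by rw [neg_div]; linarith)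
      filter_upwards [this] with t ht
      linarith
    · intro D hD
      obtain ⟨D', hD1, hD2⟩ := exists_between hD
      obtain ⟨k, ⟨hkD, hk1⟩, hk⟩ := ((((hcont.mono_left nhdsWithin_le_nhds).eventually
        (gt_mem_nhds hD1)).and ((gt_mem_nhds hκ1).filter_mono nhdsWithin_le_nhds)).and
        (self_mem_nhdsWithin : Set.Ioi κ ∈ nhdsWithin κ (Set.Ioi κ))).exists
      have hk : κ < k := hk
      have hpow : Tendsto (fun l : ℝ => l ^ (-k)) (nhdsWithin 1 (Set.Iio 1)) (nhds 1) := by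
        have := (Real.continuousAt_rpow_const 1 (-k) (Or.inl one_ne_zero)).tendsto
        rw [Real.one_rpow] at this
        exact this.mono_left nhdsWithin_le_nhds
      have hlim := (aux_lim k hk1).mul hpow
      rw [mul_one] at hlim
      obtain ⟨l, hlD, hl0, hl1⟩ := ((hlim.eventually (gt_mem_nhds hkD)).and hl0ev).exists
      have hlt : l ^ (-κ) < l ^ (-k) := Real.rpow_lt_rpow_of_exponent_gt hl0 hl1 (by linarith)
      obtain ⟨T, hT⟩ := eventually_atTop.1 (((hq l hl0).eventually (gt_mem_nhds hlt)).and
        (eventually_gt_atTop 0))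
      have hT0 := (hT T le_rfl).2
      have hle : l * l ^ (-k) = l ^ (1 - k) := by
        rw [sub_eq_add_neg, Real.rpow_add hl0, Real.rpow_one]
      have hB0 : 0 ≤ l ^ (1 - k) := Real.rpow_nonneg hl0.le _
      have hB1 : l ^ (1 - k) < 1 := Real.rpow_lt_one hl0.le hl1 (by linarith)
      have := aux_iter r l T ((1 - l) * l ^ (-k)) (l ^ (1 - k)) (1 / G T) hl0 hl1 hT0 hB0 hB1
        (by
          intro t ht
          have ht0 := (hT t ht).2
          have h1 := (hT t ht).1
          have h2 := hrecU l t hl0 hl1 ht0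
          have h3 := (hrpos (l * t) (mul_pos hl0 ht0)).le
          have h4 : l * (G (l * t) / G t) * r (l * t) ≤ l * l ^ (-k) * r (l * t) := by gcongr
          have h5 : (1 - l) * (G (l * t) / G t) ≤ (1 - l) * l ^ (-k) :=
            mul_le_mul_of_nonneg_left h1.le (by linarith)
          rw [hle] at h4
          linarith)
        (by
          intro t ht htT
          have ht0 : 0 < t := lt_of_lt_of_le (mul_pos hl0 hT0) ht
          have h1 := hmle t ht0
          have h2 := hanti htT
          simp only [hr]
          rw [div_le_div_iff₀ (mul_pos ht0 (hGpos t)) (hGpos T)]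
          have := hGpos T
          have := mul_le_mul h1 h2 this.le ht0.le
          linarith) D' (by rw [div_mul_eq_mul_div] at hlD; exact hlD)
      filter_upwards [this] with t ht
      linarith
  have hfin := key.inv₀ (by have : 0 < 1 - κ := by linarith
                            positivity)
  rw [one_div, inv_inv] at hfin
  refine hfin.congr fun t => ?_
  simp only [hr, inv_div, hG]
end

section
/- Let μ be a Borel probability measure on ℝ with μ([0,∞)) = 1, let F(t) = μ([0,t]). Let κ ∈ (0,1) and let L be a slowly varying function, and assume that 1 − F(t) ~ L(t)/t^κ as t → ∞. Then the characteristic function μ̂(t) = ∫₀^∞ e^{itx} μ(dx) satisfies, as t → 0⁺, μ̂(t) = 1 − e^{−iπκ/2} Γ(1−κ) t^κ L(1/t) (1 + o(1)); equivalently, (1 − μ̂(t)) / (t^κ L(1/t)) → e^{−iπκ/2} Γ(1−κ) as t → 0⁺, where Γ is Euler's Gamma function. -/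
open MeasureTheory Filter

lemma potter_aux (G : ℝ → ℝ) (hG : Antitone G) (hpos : ∀ x, 0 < G x) (hle : ∀ x, G x ≤ 1)
    (κ ρ : ℝ) (hρ : κ < ρ) (hρ0 : 0 < ρ)
    (h2 : Tendsto (fun x => G (x / 2) / G x) atTop (nhds ((2:ℝ) ^ κ))) :
    ∃ X C : ℝ, 0 < X ∧ 0 < C ∧ ∀ y ≥ X, ∀ u : ℝ, 0 < u → u ≤ 1 →
      G (u * y) ≤ C * u ^ (-ρ) * G y := by
  have hlt : (2:ℝ) ^ κ < 2 ^ ρ := Real.rpow_lt_rpow_of_exponent_lt (by norm_num) hρ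
  obtain ⟨X1, hX1⟩ := eventually_atTop.1 (h2.eventually (gt_mem_nhds hlt))
  set X := max X1 1 with hX
  have hX0 : 0 < X := lt_of_lt_of_le one_pos (le_max_right _ _)
  have hhalf : ∀ x ≥ X, G (x / 2) ≤ 2 ^ ρ * G x := by
    intro x hx
    have := hX1 x (le_trans (le_max_left _ _) hx)
    rw [div_lt_iff₀ (hpos x)] at this
    exact this.le
  have h2ρ : (1:ℝ) ≤ 2 ^ ρ := Real.one_le_rpow (by norm_num) hρ0.le
  have hu1 : ∀ u : ℝ, 0 < u → u ≤ 1 → 1 ≤ u ^ (-ρ) := fun u h0 h1 =>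
    Real.one_le_rpow_of_pos_of_le_one_of_nonpos h0 h1 (by linarith)
  have key : ∀ n : ℕ, ∀ y : ℝ, ∀ u : ℝ, (1/2:ℝ) ^ n ≤ u → u ≤ 1 → X ≤ u * y →
      G (u * y) ≤ 2 ^ ρ * u ^ (-ρ) * G y := by
    intro n
    induction n with
    | zero =>
      intro y u h h1 hX
      have : u = 1 := le_antisymm h1 (by simpa using h)
      subst this
      simp only [one_mul, Real.one_rpow, mul_one]
      nlinarith [hpos y]
    | succ n ih =>
      intro y u h h1 hXu
      have hu0 : 0 < u := lt_of_lt_of_le (by positivity) h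
      have hy : 0 < y := by
        by_contra hy
        nlinarith
      by_cases hu : 1/2 ≤ u
      · have hXy : X ≤ y := by nlinarith
        calc G (u * y) ≤ G (y / 2) := hG (by nlinarith)
          _ ≤ 2 ^ ρ * G y := hhalf y hXy
          _ = 2 ^ ρ * 1 * G y := by ring
          _ ≤ _ := by
            have := hu1 u hu0 h1
            have := hpos y
            gcongr
      · push Not at hu
        have h3 := ih y (2 * u) (by rw [pow_succ] at h; linarith) (by linarith) (by nlinarith)
        have h4 := hhalf (2 * u * y) (by nlinarith)
        have e : 2 * u * y / 2 = u * y := by ring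
        rw [e] at h4
        have e2 : (2:ℝ) ^ ρ * (2 * u) ^ (-ρ) = u ^ (-ρ) := by
          rw [Real.mul_rpow (by norm_num) hu0.le, ← mul_assoc, ← Real.rpow_add (by norm_num)]
          simp
        calc G (u * y) ≤ 2 ^ ρ * G (2 * u * y) := h4
          _ ≤ 2 ^ ρ * (2 ^ ρ * (2 * u) ^ (-ρ) * G y) := by gcongr
          _ = 2 ^ ρ * u ^ (-ρ) * G y := by rw [e2]; ring
  have key' : ∀ y : ℝ, ∀ u : ℝ, 0 < u → u ≤ 1 → X ≤ u * y →
      G (u * y) ≤ 2 ^ ρ * u ^ (-ρ) * G y := by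
    intro y u h0 h1 h
    obtain ⟨n, hn⟩ := exists_pow_lt_of_lt_one h0 (by norm_num : (1/2:ℝ) < 1)
    exact key n y u hn.le h1 h
  refine ⟨X, 2 ^ ρ / G X, hX0, div_pos (by positivity) (hpos X), ?_⟩
  intro y hy u h0 h1
  have hy0 : 0 < y := by linarith
  have hGy := hpos y
  have hGX := hpos X
  have hup : 0 < u ^ (-ρ) := by positivity
  by_cases h : X ≤ u * y
  · refine (key' y u h0 h1 h).trans ?_
    have : (2:ℝ) ^ ρ ≤ 2 ^ ρ / G X := le_div_self (by positivity) hGX (hle X)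
    gcongr
  · push Not at h
    have h5 := key' y (X / y) (by positivity) ((div_le_one hy0).2 hy) (by rw [div_mul_cancel₀ _ hy0.ne'])
    rw [div_mul_cancel₀ _ hy0.ne'] at h5
    have h6 : (X / y) ^ (-ρ) ≤ u ^ (-ρ) :=
      Real.rpow_le_rpow_of_nonpos h0 (by rw [le_div_iff₀ hy0]; exact h.le) (by linarith)
    have h7 : G X ≤ 2 ^ ρ * u ^ (-ρ) * G y := h5.trans (by gcongr)
    calc G (u * y) ≤ 1 := hle _
      _ ≤ (2 ^ ρ * u ^ (-ρ) * G y) / G X := (one_le_div hGX).2 h7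
      _ = _ := by ring

lemma dct_aux (G : ℝ → ℝ) (hG : Antitone G) (hpos : ∀ x, 0 < G x) (hle : ∀ x, G x ≤ 1)
    (κ : ℝ) (hκ0 : 0 < κ) (hκ1 : κ < 1)
    (hrv : ∀ u > 0, Tendsto (fun y => G (u * y) / G y) atTop (nhds (u ^ (-κ)))) (M : ℝ) (hM : 0 < M) :
    Tendsto (fun y : ℝ => ∫ u in (0:ℝ)..M, Complex.exp (u * Complex.I) * ((G (u * y) / G y : ℝ) : ℂ))
      atTop (nhds (∫ u in (0:ℝ)..M, Complex.exp (u * Complex.I) * ((u ^ (-κ) : ℝ) : ℂ))) := by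
  obtain ⟨ρ, hρ, hρ1⟩ := exists_between hκ1
  obtain ⟨X, C, hX, hC, hb⟩ := potter_aux G hG hpos hle κ ρ hρ (by linarith) (by
    have := hrv (1/2) (by norm_num)
    have e : ((1:ℝ)/2) ^ (-κ) = 2 ^ κ := by
      rw [one_div, Real.inv_rpow (by norm_num), Real.rpow_neg (by norm_num), inv_inv]
    rw [e] at this
    refine this.congr fun y => ?_
    congr 2; ring)
  refine intervalIntegral.tendsto_integral_filter_of_dominated_convergence
    (fun u => C * u ^ (-ρ) + 1) ?_ ?_ ?_ ?_
  · refine Eventually.of_forall fun y => Measurable.aestronglyMeasurable ?_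
    have := hG.measurable
    fun_prop
  · filter_upwards [eventually_ge_atTop X] with y hy
    refine Eventually.of_forall fun u hu => ?_
    rw [Set.uIoc_of_le hM.le] at hu
    have hGy := hpos y
    have hq : 0 ≤ G (u * y) / G y := div_nonneg (hpos _).le hGy.le
    rw [norm_mul, Complex.norm_exp_ofReal_mul_I, one_mul, Complex.norm_real, Real.norm_of_nonneg hq]
    have hup : 0 ≤ C * u ^ (-ρ) := mul_nonneg hC.le (Real.rpow_nonneg hu.1.le _)
    by_cases h1 : u ≤ 1
    · have := hb y hy u hu.1 h1
      rw [← div_le_iff₀ hGy] at this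
      linarith
    · have : G (u * y) / G y ≤ 1 := by
        rw [div_le_one hGy]
        apply hG
        push Not at h1
        nlinarith
      linarith
  · exact ((intervalIntegral.intervalIntegrable_rpow' (by linarith)).const_mul _).add
      intervalIntegrable_const
  · refine Eventually.of_forall fun u hu => ?_
    rw [Set.uIoc_of_le hM.le] at hu
    exact ((Complex.continuous_ofReal.tendsto _).comp (hrv u hu.1)).const_mul _

lemma fubini_aux (μ : Measure ℝ) [IsProbabilityMeasure μ] (hμ : μ (Set.Ici 0) = 1)
    (t M : ℝ) (ht : 0 < t) (hM : 0 < M) :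
    ‖(1 - ∫ x, Complex.exp (((t * x : ℝ) : ℂ) * Complex.I) ∂μ)
      + Complex.I * ∫ u in (0:ℝ)..M, Complex.exp (u * Complex.I) * ((μ.real (Set.Ioi (u / t)) : ℝ) : ℂ)‖
      ≤ 2 * μ.real (Set.Ioi (M / t)) := by
  have h0 : ∀ᵐ x ∂μ, 0 ≤ x := by
    rw [← prob_compl_eq_zero_iff measurableSet_Ici] at hμ
    exact hμ
  let f : ℝ → ℝ → ℂ := fun u x => Set.indicator {p : ℝ × ℝ | p.1 < t * p.2}
    (fun p => Complex.exp (p.1 * Complex.I)) (u, x)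
  have hS : MeasurableSet {p : ℝ × ℝ | p.1 < t * p.2} :=
    measurableSet_lt measurable_fst (by fun_prop)
  have hf : Measurable (Function.uncurry f) := by
    have : Function.uncurry f = Set.indicator {p : ℝ × ℝ | p.1 < t * p.2}
      (fun p => Complex.exp (p.1 * Complex.I)) := by ext ⟨a, b⟩; rfl
    rw [this]
    exact Measurable.indicator (by fun_prop) hS
  have hfb : ∀ p, ‖Function.uncurry f p‖ ≤ 1 := by
    intro p
    refine (norm_indicator_le_norm_self (fun p : ℝ × ℝ => Complex.exp (p.1 * Complex.I)) p).trans ?_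
    rw [Complex.norm_exp_ofReal_mul_I]
  have hint : Integrable (Function.uncurry f) ((volume.restrict (Set.Ioc 0 M)).prod μ) :=
    Integrable.of_bound hf.aestronglyMeasurable 1 (Eventually.of_forall hfb)
  have h1 : (∫ u in (0:ℝ)..M, Complex.exp (u * Complex.I) * ((μ.real (Set.Ioi (u / t)) : ℝ) : ℂ))
      = ∫ u in Set.Ioc 0 M, ∫ x, f u x ∂μ := by
    rw [intervalIntegral.integral_of_le hM.le]
    congr 1
    ext u
    have : (fun x => f u x) = (Set.Ioi (u / t)).indicator (fun _ => Complex.exp (u * Complex.I)) := by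
      ext x
      simp only [f, Set.indicator, Set.mem_ofPred_eq, Set.mem_Ioi, div_lt_iff₀' ht]
    rw [this, integral_indicator_const _ measurableSet_Ioi, Complex.real_smul, mul_comm]
  have h2 : ∀ x, 0 ≤ x → (∫ u in Set.Ioc 0 M, f u x)
      = (Complex.exp ((min (t * x) M : ℝ) * Complex.I) - 1) / Complex.I := by
    intro x hx
    have hm : 0 ≤ min (t * x) M := le_min (by positivity) hM.le
    have : (fun u => f u x) = (Set.Iio (t * x)).indicator (fun u : ℝ => Complex.exp (u * Complex.I)) := by
      ext u
      simp only [f, Set.indicator, Set.mem_ofPred_eq, Set.mem_Iio]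
    rw [this, integral_indicator measurableSet_Iio, Measure.restrict_restrict measurableSet_Iio]
    have e : (Set.Iio (t * x) ∩ Set.Ioc 0 M : Set ℝ) =ᵐ[volume] Set.Ioc 0 (min (t * x) M) := by
      have : Set.Ioc 0 (min (t * x) M) = Set.Iic (t * x) ∩ Set.Ioc 0 M := by
        ext u; simp only [Set.mem_Ioc, Set.mem_inter_iff, Set.mem_Iic, le_min_iff]; tauto
      rw [this]
      exact Iio_ae_eq_Iic.inter (ae_eq_refl _)
    rw [setIntegral_congr_set e, ← intervalIntegral.integral_of_le hm]
    have := integral_exp_mul_complex (a := 0) (b := min (t * x) M) Complex.I_ne_zero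
    simp only [mul_comm Complex.I] at this
    rw [this]; simp
  have hi1 : Integrable (fun x => Complex.exp (((t * x : ℝ) : ℂ) * Complex.I)) μ :=
    Integrable.of_bound (by fun_prop) 1
      (Eventually.of_forall fun x => (Complex.norm_exp_ofReal_mul_I _).le)
  have hi2 : Integrable (fun x => Complex.exp (((min (t * x) M : ℝ) : ℂ) * Complex.I)) μ :=
    Integrable.of_bound (by fun_prop) 1
      (Eventually.of_forall fun x => (Complex.norm_exp_ofReal_mul_I _).le)
  have h3 : (1 - ∫ x, Complex.exp (((t * x : ℝ) : ℂ) * Complex.I) ∂μ)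
      + Complex.I * (∫ u in (0:ℝ)..M, Complex.exp (u * Complex.I) * ((μ.real (Set.Ioi (u / t)) : ℝ) : ℂ))
      = ∫ x, (Complex.exp (((min (t * x) M : ℝ) : ℂ) * Complex.I)
          - Complex.exp (((t * x : ℝ) : ℂ) * Complex.I)) ∂μ := by
    rw [h1, integral_integral_swap hint, integral_congr_ae (h0.mono fun x hx => h2 x hx),
      integral_div, integral_sub hi2 (integrable_const _), integral_sub hi2 hi1]
    rw [mul_div_cancel₀ _ Complex.I_ne_zero]
    simp
  rw [h3]
  have h4 : ∀ x, ‖Complex.exp (((min (t * x) M : ℝ) : ℂ) * Complex.I)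
          - Complex.exp (((t * x : ℝ) : ℂ) * Complex.I)‖ ≤ (Set.Ioi (M / t)).indicator (fun _ => (2:ℝ)) x := by
    intro x
    by_cases hx : x ∈ Set.Ioi (M / t)
    · rw [Set.indicator_of_mem hx]
      refine (norm_sub_le _ _).trans ?_
      rw [Complex.norm_exp_ofReal_mul_I, Complex.norm_exp_ofReal_mul_I]; norm_num
    · rw [Set.indicator_of_notMem hx]
      simp only [Set.mem_Ioi, not_lt, le_div_iff₀' ht] at hx
      rw [min_eq_left hx]; simp
  refine (norm_integral_le_of_norm_le ((integrable_const _).indicator measurableSet_Ioi)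
    (Eventually.of_forall h4)).trans ?_
  rw [integral_indicator_const _ measurableSet_Ioi, smul_eq_mul, mul_comm]

lemma parts_aux (κ : ℝ) (hκ0 : 0 < κ) (r : ℂ) (hr : 0 ≤ r.re) (hr1 : 1 ≤ ‖r‖) (M N : ℝ)
    (hM : 0 < M) (hMN : M ≤ N) :
    ‖∫ u in M..N, Complex.exp (-r * u) * ((u ^ (-κ) : ℝ) : ℂ)‖ ≤ 2 * M ^ (-κ) := by
  have hr0 : r ≠ 0 := by rintro rfl; norm_num at hr1
  have hIcc : Set.uIcc M N = Set.Icc M N := Set.uIcc_of_le hMN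
  have hd1 : ∀ x ∈ Set.uIcc M N, HasDerivAt (fun u : ℝ => ((u ^ (-κ) : ℝ) : ℂ))
      (((-κ * x ^ (-κ - 1) : ℝ)) : ℂ) x := by
    intro x hx
    rw [hIcc] at hx
    exact (Real.hasDerivAt_rpow_const (Or.inl (by linarith [hx.1]))).ofReal_comp
  have hd2 : ∀ x ∈ Set.uIcc M N, HasDerivAt (fun u : ℝ => Complex.exp (-r * u) / (-r))
      (Complex.exp (-r * x)) x := by
    intro x hx
    have h1 : HasDerivAt (fun u : ℝ => -r * (u:ℂ)) (-r * 1) x :=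
      (Complex.ofRealCLM.hasDerivAt (x := x)).const_mul (-r)
    have h2 := (h1.cexp).div_const (-r)
    rw [mul_one, mul_div_cancel_right₀ _ (neg_ne_zero.2 hr0)] at h2
    exact h2
  have hc : ContinuousOn (fun x : ℝ => x ^ (-κ - 1)) (Set.uIcc M N) := by
    rw [hIcc]
    exact ContinuousOn.rpow_const continuousOn_id fun x hx => Or.inl (by simp; linarith [hx.1])
  have hii : IntervalIntegrable (fun x : ℝ => κ * x ^ (-κ - 1)) volume M N :=
    (hc.const_smul κ).intervalIntegrable
  have hip := intervalIntegral.integral_mul_deriv_eq_deriv_mul hd1 hd2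
    (by
      apply ContinuousOn.intervalIntegrable
      exact Complex.continuous_ofReal.comp_continuousOn (hc.const_smul (-κ)))
    (by apply Continuous.intervalIntegrable; fun_prop)
  have e1 : (∫ u in M..N, Complex.exp (-r * u) * ((u ^ (-κ) : ℝ) : ℂ))
     = ∫ u in M..N, ((u ^ (-κ) : ℝ) : ℂ) * Complex.exp (-r * u) := by
    congr 1; ext u; ring
  have hE : ∀ u : ℝ, 0 ≤ u → ‖Complex.exp (-r * u) / (-r)‖ ≤ 1 := by
    intro u hu
    rw [norm_div, norm_neg, Complex.norm_exp]
    have : (-r * (u:ℂ)).re ≤ 0 := by simp; positivity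
    have : Real.exp ((-r * (u:ℂ)).re) ≤ 1 := Real.exp_le_one_iff.2 this
    exact (div_le_one (by linarith)).2 (this.trans hr1)
  have hN : 0 < N := by linarith
  have hb : ‖∫ x in M..N, (((-κ * x ^ (-κ - 1) : ℝ)) : ℂ) * (Complex.exp (-r * x) / (-r))‖
      ≤ M ^ (-κ) - N ^ (-κ) := by
    have : ∫ x in M..N, κ * x ^ (-κ - 1) = M ^ (-κ) - N ^ (-κ) := by
      have := intervalIntegral.integral_eq_sub_of_hasDerivAt (a := M) (b := N)
        (f := fun x => - x ^ (-κ)) (f' := fun x => κ * x ^ (-κ - 1)) (fun x hx => by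
          rw [hIcc] at hx
          have := (Real.hasDerivAt_rpow_const (p := -κ) (x := x) (Or.inl (by linarith [hx.1]))).fun_neg
          rw [neg_mul, neg_neg] at this
          exact this) hii
      rw [this]; ring
    rw [← this]
    refine intervalIntegral.norm_integral_le_of_norm_le hMN ?_ hii
    refine Eventually.of_forall fun x hx => ?_
    have hx0 : 0 < x := by linarith [hx.1]
    have hp : 0 ≤ κ * x ^ (-κ - 1) := by positivity
    rw [norm_mul, Complex.norm_real, neg_mul, norm_neg, Real.norm_of_nonneg hp]
    exact mul_le_of_le_one_right hp (hE x hx0.le)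
  have hB : ∀ u : ℝ, 0 < u → ‖((u ^ (-κ) : ℝ) : ℂ) * (Complex.exp (-r * u) / (-r))‖ ≤ u ^ (-κ) := by
    intro u hu
    have hp : 0 ≤ u ^ (-κ) := by positivity
    rw [norm_mul, Complex.norm_real, Real.norm_of_nonneg hp]
    exact mul_le_of_le_one_right hp (hE u hu.le)
  rw [e1, hip]
  refine (norm_sub_le _ _).trans ?_
  have := norm_sub_le (((N ^ (-κ) : ℝ) : ℂ) * (Complex.exp (-r * N) / (-r)))
    (((M ^ (-κ) : ℝ) : ℂ) * (Complex.exp (-r * M) / (-r)))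
  have := hB M hM
  have := hB N hN
  linarith

lemma gamma_aux (κ : ℝ) (hκ1 : κ < 1) (r : ℂ) (hr : 0 < r.re) :
    (∫ u in Set.Ioi (0:ℝ), Complex.exp (-r * u) * ((u ^ (-κ) : ℝ) : ℂ))
        = (1 / r) ^ ((1 - κ : ℝ) : ℂ) * (Real.Gamma (1 - κ) : ℂ) := by
  let U : Set ℂ := {z | 0 < z.re}
  have hU : IsOpen U := isOpen_lt continuous_const Complex.continuous_re
  have hUc : IsPreconnected U := (convex_halfSpace_re_gt 0).isPreconnected
  have hmeas : ∀ r : ℂ, Measurable (fun u : ℝ => Complex.exp (-r * u) * ((u ^ (-κ) : ℝ) : ℂ)) := by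
    intro r; fun_prop
  have hexp : ∀ s b : ℝ, -1 < s → 0 < b →
      IntegrableOn (fun u : ℝ => u ^ s * Real.exp (-b * u)) (Set.Ioi 0) := by
    intro s b hs hb
    simpa using integrableOn_rpow_mul_exp_neg_mul_rpow (p := 1) hs one_pos hb
  have hdiff : DifferentiableOn ℂ (fun r : ℂ => ∫ u in Set.Ioi (0:ℝ),
      Complex.exp (-r * u) * ((u ^ (-κ) : ℝ) : ℂ)) U := by
    intro z hz
    have hz' : 0 < z.re := hz
    have := hasDerivAt_integral_of_dominated_loc_of_deriv_le
      (μ := volume.restrict (Set.Ioi (0:ℝ))) (x₀ := z)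
      (F := fun (r : ℂ) (u : ℝ) => Complex.exp (-r * u) * ((u ^ (-κ) : ℝ) : ℂ))
      (F' := fun (r : ℂ) (u : ℝ) => (Complex.exp (-r * u) * (-u)) * ((u ^ (-κ) : ℝ) : ℂ))
      (s := {w : ℂ | z.re / 2 < w.re})
      (bound := fun u => u ^ (1 - κ) * Real.exp (-(z.re / 2) * u))
      ((isOpen_lt continuous_const Complex.continuous_re).mem_nhds
        (show z.re / 2 < z.re by linarith))
      (Eventually.of_forall fun w => (hmeas w).aestronglyMeasurable)
      (by
        refine (hexp (-κ) z.re (by linarith) hz').mono' (hmeas z).aestronglyMeasurable ?_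
        refine (ae_restrict_iff' measurableSet_Ioi).2 (Eventually.of_forall fun u hu => ?_)
        have hu0 : 0 < u := hu
        rw [norm_mul, Complex.norm_real, Real.norm_of_nonneg (Real.rpow_nonneg hu0.le _),
          Complex.norm_exp, mul_comm]
        simp)
      (by
        apply Measurable.aestronglyMeasurable
        fun_prop)
      (by
        refine (ae_restrict_iff' measurableSet_Ioi).2 (Eventually.of_forall fun u hu w hw => ?_)
        have hu0 : 0 < u := hu
        have hw' : z.re / 2 < w.re := hw
        rw [norm_mul, norm_mul, norm_neg, Complex.norm_real, Complex.norm_real,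
          Real.norm_of_nonneg hu0.le, Real.norm_of_nonneg (Real.rpow_nonneg hu0.le _),
          Complex.norm_exp, sub_eq_add_neg, Real.rpow_add hu0, Real.rpow_one]
        have h1 : (-w * (u:ℂ)).re ≤ -(z.re / 2) * u := by simp; nlinarith
        have h2 := Real.exp_le_exp.2 h1
        have h3 : 0 ≤ u * u ^ (-κ) := by positivity
        nlinarith [mul_le_mul_of_nonneg_left h2 h3])
      (hexp _ _ (by linarith) (by linarith))
      (by
        refine Eventually.of_forall fun u w hw => ?_
        have h1 : HasDerivAt (fun w : ℂ => -w * (u:ℂ)) (-1 * u) w :=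
          (hasDerivAt_id w).fun_neg.mul_const _
        have h2 := h1.cexp.mul_const ((u ^ (-κ) : ℝ) : ℂ)
        rw [neg_one_mul] at h2
        exact h2)
    exact this.2.differentiableAt.differentiableWithinAt
  have hslit : ∀ z ∈ U, 1 / z ∈ Complex.slitPlane := by
    intro z hz
    have hz' : 0 < z.re := hz
    left
    rw [one_div, Complex.inv_re]
    have : z ≠ 0 := by rintro rfl; simp at hz'
    have := Complex.normSq_pos.2 this
    positivity
  have hdiff2 : DifferentiableOn ℂ (fun r : ℂ =>
      (1 / r) ^ ((1 - κ : ℝ) : ℂ) * (Real.Gamma (1 - κ) : ℂ)) U := by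
    have h1 : DifferentiableOn ℂ (fun r : ℂ => 1 / r) U := by
      refine DifferentiableOn.div (differentiableOn_const _) differentiableOn_id ?_
      rintro z hz rfl
      simp [U] at hz
    exact (h1.cpow (differentiableOn_const _) hslit).mul_const _
  have h1U : (1:ℂ) ∈ U := by simp [U]
  refine (hdiff.analyticOnNhd hU).eqOn_of_preconnected_of_frequently_eq
    (hdiff2.analyticOnNhd hU) hUc h1U ?_ hr
  have hT : Tendsto (fun x : ℝ => (x : ℂ)) (nhdsWithin 1 (Set.Ioi 1)) (nhdsWithin (1:ℂ) {1}ᶜ) := by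
    refine tendsto_nhdsWithin_iff.2 ⟨?_, ?_⟩
    · have := (Complex.continuous_ofReal.tendsto 1).mono_left (nhdsWithin_le_nhds (s := Set.Ioi 1))
      simpa using this
    · filter_upwards [self_mem_nhdsWithin] with x hx
      have : x ≠ 1 := ne_of_gt hx
      simpa using this
  refine hT.frequently (Eventually.frequently ?_)
  filter_upwards [self_mem_nhdsWithin] with x hx
  have hx0 : 0 < x := lt_trans one_pos hx
  have hgam := Complex.integral_cpow_mul_exp_neg_mul_Ioi (a := ((1 - κ : ℝ) : ℂ)) (r := x)
      (by simp; linarith) hx0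
  rw [← Complex.Gamma_ofReal, ← hgam]
  refine setIntegral_congr_fun measurableSet_Ioi fun u hu => ?_
  rw [Complex.ofReal_cpow (le_of_lt hu), mul_comm, neg_mul]
  congr 2
  push_cast; ring

lemma const_aux (κ : ℝ) (hκ0 : 0 < κ) (hκ1 : κ < 1) (M : ℝ) (hM : 0 < M) :
    ‖(∫ u in (0:ℝ)..M, Complex.exp (u * Complex.I) * ((u ^ (-κ) : ℝ) : ℂ))
      - Complex.I ^ ((1 - κ : ℝ) : ℂ) * (Real.Gamma (1 - κ) : ℂ)‖ ≤ 2 * M ^ (-κ) := by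
  have hrp : ∀ a b : ℝ, IntervalIntegrable (fun u : ℝ => u ^ (-κ)) volume a b :=
    fun a b => intervalIntegral.intervalIntegrable_rpow' (by linarith)
  have hmeas : ∀ r : ℂ, Measurable (fun u : ℝ => Complex.exp (-r * u) * ((u ^ (-κ) : ℝ) : ℂ)) := by
    intro r; fun_prop
  have hnorm : ∀ r : ℂ, 0 ≤ r.re → ∀ u : ℝ, 0 < u →
      ‖Complex.exp (-r * u) * ((u ^ (-κ) : ℝ) : ℂ)‖ ≤ u ^ (-κ) := by
    intro r hr u hu
    have hp : 0 ≤ u ^ (-κ) := by positivity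
    rw [norm_mul, Complex.norm_real, Real.norm_of_nonneg hp, Complex.norm_exp]
    have : (-r * (u:ℂ)).re ≤ 0 := by simp; positivity
    exact mul_le_of_le_one_left hp (Real.exp_le_one_iff.2 this)
  -- for ε > 0
  have hε : ∀ ε : ℝ, 0 < ε →
      ‖(∫ u in (0:ℝ)..M, Complex.exp (-(ε - Complex.I) * u) * ((u ^ (-κ) : ℝ) : ℂ))
      - (1 / ((ε:ℂ) - Complex.I)) ^ ((1 - κ : ℝ) : ℂ) * (Real.Gamma (1 - κ) : ℂ)‖ ≤ 2 * M ^ (-κ) := by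
    intro ε hε
    set r : ℂ := (ε:ℂ) - Complex.I with hr
    have hre : r.re = ε := by simp [hr]
    have him : r.im = -1 := by simp [hr]
    have hr1 : 1 ≤ ‖r‖ := by
      have := Complex.abs_im_le_norm r
      rw [him] at this; simpa using this
    have e1 := gamma_aux κ hκ1 r (by rw [hre]; exact hε)
    have hint : IntegrableOn (fun u : ℝ => Complex.exp (-r * u) * ((u ^ (-κ) : ℝ) : ℂ)) (Set.Ioi 0) := by
      by_contra hcon
      rw [integral_undef hcon] at e1
      have hr0 : r ≠ 0 := by rintro h; rw [h] at hr1; norm_num at hr1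
      have : (1 / r) ^ ((1 - κ : ℝ) : ℂ) ≠ 0 := by
        simp [Complex.cpow_eq_zero_iff, hr0]
      have h2 : Real.Gamma (1 - κ) ≠ 0 := (Real.Gamma_pos_of_pos (by linarith)).ne'
      exact mul_ne_zero this (Complex.ofReal_ne_zero.2 h2) e1.symm
    have hT := intervalIntegral_tendsto_integral_Ioi 0 hint tendsto_id
    rw [e1] at hT
    have hT2 := (hT.const_sub (∫ u in (0:ℝ)..M, Complex.exp (-r * u) * ((u ^ (-κ) : ℝ) : ℂ))).norm
    refine le_of_tendsto hT2 ?_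
    filter_upwards [eventually_ge_atTop M] with N hN
    have hI : ∀ b : ℝ, 0 ≤ b → IntervalIntegrable (fun u : ℝ => Complex.exp (-r * u) * ((u ^ (-κ) : ℝ) : ℂ)) volume 0 b :=
      fun b hb => (intervalIntegrable_iff_integrableOn_Ioc_of_le hb).2
        (hint.mono_set Set.Ioc_subset_Ioi_self)
    rw [norm_sub_rev, id, intervalIntegral.integral_interval_sub_left (hI N (by linarith)) (hI M hM.le)]
    exact parts_aux κ hκ0 r (by linarith) hr1 M N hM hN
  have hlim1 : Tendsto (fun ε : ℝ => ∫ u in (0:ℝ)..M, Complex.exp (-(ε - Complex.I) * u) * ((u ^ (-κ) : ℝ) : ℂ))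
      (nhdsWithin 0 (Set.Ioi 0))
      (nhds (∫ u in (0:ℝ)..M, Complex.exp (u * Complex.I) * ((u ^ (-κ) : ℝ) : ℂ))) := by
    refine intervalIntegral.tendsto_integral_filter_of_dominated_convergence
      (fun u => u ^ (-κ)) ?_ ?_ (hrp _ _) ?_
    · exact Eventually.of_forall fun ε => (hmeas _).aestronglyMeasurable
    · filter_upwards [self_mem_nhdsWithin] with ε hε
      refine Eventually.of_forall fun u hu => ?_
      rw [Set.uIoc_of_le hM.le] at hu
      exact hnorm _ (by simpa using le_of_lt hε) u hu.1
    · refine Eventually.of_forall fun u hu => ?_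
      have : Continuous fun ε : ℝ => Complex.exp (-((ε:ℂ) - Complex.I) * u) * ((u ^ (-κ) : ℝ) : ℂ) := by
        fun_prop
      have h := (this.tendsto 0).mono_left (nhdsWithin_le_nhds (s := Set.Ioi 0))
      convert h using 4
      simp [mul_comm]
  have hlim2 : Tendsto (fun ε : ℝ => (1 / ((ε:ℂ) - Complex.I)) ^ ((1 - κ : ℝ) : ℂ))
      (nhdsWithin 0 (Set.Ioi 0)) (nhds (Complex.I ^ ((1 - κ : ℝ) : ℂ))) := by
    have h1 : ContinuousAt (fun ε : ℝ => 1 / ((ε:ℂ) - Complex.I)) 0 := by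
      refine ContinuousAt.div (by fun_prop) (by fun_prop) (by simp)
    have h0 : 1 / (((0:ℝ):ℂ) - Complex.I) = Complex.I := by simp
    have h2 : ContinuousAt (fun z : ℂ => z ^ ((1 - κ : ℝ) : ℂ)) (1 / (((0:ℝ):ℂ) - Complex.I)) := by
      rw [h0]
      exact continuousAt_cpow_const (Or.inr (by simp))
    have := (h2.comp (f := fun ε : ℝ => 1 / ((ε:ℂ) - Complex.I)) h1).tendsto
    simp only [Function.comp_def, h0] at this
    exact this.mono_left nhdsWithin_le_nhds
  refine le_of_tendsto (hlim1.sub (hlim2.mul_const _)).norm ?_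
  filter_upwards [self_mem_nhdsWithin] with ε h
  exact hε ε h

theorem stmt_4 (μ : Measure ℝ) [IsProbabilityMeasure μ] (hμ : μ (Set.Ici 0) = 1)
    (F : ℝ → ℝ) (hF : ∀ t, F t = (μ (Set.Icc 0 t)).toReal)
    (κ : ℝ) (hκ : κ ∈ Set.Ioo (0:ℝ) 1)
    (L : ℝ → ℝ) (hLpos : ∀ t > 0, 0 < L t) (hLmeas : Measurable L)
    (hLslow : ∀ lam > 0, Tendsto (fun t => L (lam * t) / L t) atTop (nhds 1))
    (htail : Tendsto (fun t => (1 - F t) / (L t / t ^ κ)) atTop (nhds 1)) :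
    Tendsto (fun t : ℝ =>
        (1 - ∫ x, Complex.exp (((t * x : ℝ) : ℂ) * Complex.I) ∂μ)
          / ((t ^ κ * L (1 / t) : ℝ) : ℂ))
      (nhdsWithin 0 (Set.Ioi 0))
      (nhds (Complex.exp (-(Real.pi * κ / 2 : ℝ) * Complex.I) * (Real.Gamma (1 - κ) : ℂ))) := by
  obtain ⟨hκ0, hκ1⟩ := hκ
  set G : ℝ → ℝ := fun x => μ.real (Set.Ioi x) with hGdef
  have hG : Antitone G := fun a b hab => measureReal_mono (Set.Ioi_subset_Ioi hab)
  have hle : ∀ x, G x ≤ 1 := fun x => measureReal_le_one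
  have hGF : ∀ x, 0 ≤ x → 1 - F x = G x := by
    intro x hx
    have h1 : μ.real (Set.Ici 0) = μ.real (Set.Icc 0 x) + μ.real (Set.Ioi x) := by
      rw [← measureReal_union _ measurableSet_Ioi, Set.Icc_union_Ioi_eq_Ici hx]
      rw [Set.disjoint_left]
      intro y hy hy2
      exact absurd hy.2 (not_le.2 hy2)
    have h2 : μ.real (Set.Ici 0) = 1 := by simp [Measure.real, hμ]
    rw [hF x]
    change 1 - μ.real (Set.Icc 0 x) = G x
    simp only [hGdef]
    linarith
  have htail' : Tendsto (fun t => G t / (L t / t ^ κ)) atTop (nhds 1) := by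
    refine htail.congr' ?_
    filter_upwards [eventually_ge_atTop 0] with t ht
    rw [hGF t ht]
  have hpos : ∀ x, 0 < G x := by
    intro x
    obtain ⟨y, hy, hxy, hy0⟩ := ((htail'.eventually (lt_mem_nhds one_pos)).and
      ((eventually_ge_atTop x).and (eventually_gt_atTop 0))).exists
    have hp : 0 < L y / y ^ κ := div_pos (hLpos y hy0) (Real.rpow_pos_of_pos hy0 _)
    have : 0 < G y := by
      by_contra h
      push Not at h
      exact absurd hy (not_lt.2 (div_nonpos_of_nonpos_of_nonneg h hp.le))
    exact this.trans_le (hG hxy)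
  have hrv : ∀ u > 0, Tendsto (fun y => G (u * y) / G y) atTop (nhds (u ^ (-κ))) := by
    intro u hu
    have h1 := htail'.comp (tendsto_id.const_mul_atTop hu)
    have h2 := ((h1.div htail' one_ne_zero).mul (hLslow u hu)).mul_const (u ^ (-κ))
    simp only [div_one, one_mul] at h2
    refine h2.congr' ?_
    filter_upwards [eventually_gt_atTop 0] with y hy
    have := hLpos y hy
    have := hLpos (u * y) (by positivity)
    have := hpos y
    have : 0 < u ^ κ := by positivity
    have : 0 < y ^ κ := by positivity
    simp only [Pi.div_apply, Function.comp, id]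
    rw [Real.mul_rpow hu.le hy.le, Real.rpow_neg hu.le]
    field_simp
  set c : ℂ := Complex.I ^ ((1 - κ : ℝ) : ℂ) * (Real.Gamma (1 - κ) : ℂ) with hc
  have hconst : Complex.exp (-(Real.pi * κ / 2 : ℝ) * Complex.I) * (Real.Gamma (1 - κ) : ℂ)
      = -Complex.I * c := by
    rw [hc, Complex.cpow_def_of_ne_zero Complex.I_ne_zero, Complex.log_I, ← mul_assoc]
    congr 1
    have : -Complex.I = Complex.exp (-(Real.pi / 2) * Complex.I) := by
      rw [neg_mul, Complex.exp_neg, Complex.exp_pi_div_two_mul_I, Complex.inv_I]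
    rw [this, ← Complex.exp_add]
    congr 1
    push_cast
    ring
  let A : ℝ → ℂ := fun y => (1 - ∫ x, Complex.exp (((y⁻¹ * x : ℝ) : ℂ) * Complex.I) ∂μ)
  have hA : Tendsto (fun y => A y / (G y : ℂ)) atTop (nhds (-Complex.I * c)) := by
    rw [Metric.tendsto_nhds]
    intro ε hε
    have hM0 : Tendsto (fun M : ℝ => 4 * M ^ (-κ)) atTop (nhds 0) := by
      simpa using (tendsto_rpow_neg_atTop hκ0).const_mul 4
    obtain ⟨M, hMε, hM⟩ := ((hM0.eventually (gt_mem_nhds hε)).and (eventually_gt_atTop 0)).exists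
    set IM : ℂ := ∫ u in (0:ℝ)..M, Complex.exp (u * Complex.I) * ((u ^ (-κ) : ℝ) : ℂ) with hIM
    have hJ := dct_aux G hG hpos hle κ hκ0 hκ1 hrv M hM
    have hR := ((hJ.sub_const IM).norm.add ((hrv M hM).const_mul 2)).add_const (2 * M ^ (-κ))
    rw [← hIM, sub_self, norm_zero] at hR
    filter_upwards [hR.eventually (gt_mem_nhds (by linarith : _ < ε)), eventually_gt_atTop 0] with y hy hy0
    refine lt_of_le_of_lt ?_ hy
    have hGy := hpos y
    have hfub := fubini_aux μ hμ y⁻¹ M (by positivity) hM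
    simp only [div_inv_eq_mul] at hfub
    set J : ℂ := ∫ u in (0:ℝ)..M, Complex.exp (u * Complex.I) * ((G (u * y) / G y : ℝ) : ℂ) with hJdef
    have hJ2 : (∫ u in (0:ℝ)..M, Complex.exp (u * Complex.I) * ((μ.real (Set.Ioi (u * y)) : ℝ) : ℂ))
        = J * (G y : ℂ) := by
      rw [hJdef, ← intervalIntegral.integral_mul_const]
      congr 1
      ext u
      have : (G y : ℂ) ≠ 0 := by exact_mod_cast hGy.ne'
      push_cast
      field_simp
      rfl
    rw [hJ2] at hfub
    have hfub2 : ‖A y / (G y : ℂ) + Complex.I * J‖ ≤ 2 * (G (M * y) / G y) := by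
      have : (G y : ℂ) ≠ 0 := by exact_mod_cast hGy.ne'
      have e : A y / (G y : ℂ) + Complex.I * J = (A y + Complex.I * (J * (G y : ℂ))) / (G y : ℂ) := by
        field_simp
      rw [e, norm_div, Complex.norm_real, Real.norm_of_nonneg hGy.le, ← mul_div_assoc]
      exact div_le_div_of_nonneg_right hfub hGy.le
    have hca := const_aux κ hκ0 hκ1 M hM
    rw [← hIM, ← hc] at hca
    rw [dist_eq_norm]
    have e : A y / (G y : ℂ) - -Complex.I * c
      = (A y / (G y : ℂ) + Complex.I * J) + (-Complex.I) * (J - IM) + (-Complex.I) * (IM - c) := by ring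
    rw [e]
    refine norm_add₃_le.trans ?_
    rw [norm_mul, norm_mul, norm_neg, Complex.norm_I, one_mul, one_mul]
    linarith
  rw [hconst]
  have hB := hA.mul ((Complex.continuous_ofReal.tendsto _).comp htail')
  rw [Complex.ofReal_one, mul_one] at hB
  refine (hB.comp tendsto_inv_nhdsGT_zero).congr' ?_
  filter_upwards [self_mem_nhdsWithin] with t ht
  have ht0 : 0 < t := ht
  have h1 : (G t⁻¹ : ℂ) ≠ 0 := by exact_mod_cast (hpos t⁻¹).ne'
  have h2 : (L t⁻¹ : ℂ) ≠ 0 := by exact_mod_cast (hLpos t⁻¹ (by positivity)).ne'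
  have h3 : ((t ^ κ : ℝ) : ℂ) ≠ 0 := by exact_mod_cast (Real.rpow_pos_of_pos ht0 κ).ne'
  simp only [Function.comp, A, inv_inv, one_div, Real.inv_rpow ht0.le, Complex.ofReal_div,
    Complex.ofReal_mul, Complex.ofReal_inv]
  generalize (∫ x, Complex.exp ((t : ℂ) * (x : ℂ) * Complex.I) ∂μ) = z
  generalize (G t⁻¹ : ℂ) = g at *
  generalize (L t⁻¹ : ℂ) = l at *
  field_simp
end

section
/- Let ω > 2, κ ∈ (1/2, 1), and δ = ω/2. Let (d_n)_{n≥3} be a sequence of reals for which there exists a constant M ≥ 0 such that |d_n − (2 log n + 2(1+κ) log log n)/ω| ≤ M/ω for all n ≥ 3. Then there exist constants 0 < c₁ ≤ c₂ and t₀ > 0 such that for all t ≥ t₀: c₁ t^{−κ} ≤ Σ_{n≥3 : d_n > t} e^{−δ d_n} ≤ c₂ t^{−κ}. -/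
open Filter
open scoped ENNReal

/-- The tangent line inequality for `x ↦ x^(-κ)`. -/
lemma aux_tangent (κ x y : ℝ) (hκ : 0 < κ) (hx : 0 < x) (hy : 0 < y) :
    y ^ (-κ) - κ * y ^ (-(1 + κ)) * (x - y) ≤ x ^ (-κ) := by
  have h1 : 1 + (-κ) * (x / y - 1) ≤ (x / y) ^ (-κ) := by
    have hxy : 0 < x / y := by positivity
    have h2 := Real.add_one_le_exp (Real.log (x / y) * (-κ))
    rw [← Real.rpow_def_of_pos hxy] at h2
    have h3 := Real.log_le_sub_one_of_pos hxy
    nlinarith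
  rw [Real.div_rpow hx.le hy.le] at h1
  have hyk : 0 < y ^ (-κ) := by positivity
  rw [le_div_iff₀ hyk] at h1
  have h4 : y ^ (-(1 + κ)) = y ^ (-κ) / y := by
    rw [show -(1 + κ) = -κ - 1 by ring, Real.rpow_sub_one hy.ne']
  rw [h4]
  refine le_trans (le_of_eq ?_) h1
  field_simp
  ring

lemma aux_log_succ_le (n : ℕ) (hn : 2 ≤ n) :
    Real.log ((n + 1 : ℕ) : ℝ) - Real.log n ≤ (n : ℝ)⁻¹ := by
  have hn0 : (0 : ℝ) < n := by positivity
  push_cast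
  rw [← Real.log_div (by positivity) (by positivity)]
  have := Real.log_le_sub_one_of_pos (x := ((n : ℝ) + 1) / n) (by positivity)
  refine this.trans (le_of_eq ?_)
  field_simp
  ring

lemma aux_le_log_succ (n : ℕ) (hn : 2 ≤ n) :
    ((n + 1 : ℕ) : ℝ)⁻¹ ≤ Real.log ((n + 1 : ℕ) : ℝ) - Real.log n := by
  have hn0 : (0 : ℝ) < n := by positivity
  push_cast
  have := Real.log_le_sub_one_of_pos (x := (n : ℝ) / (n + 1)) (by positivity)
  rw [Real.log_div (by positivity) (by positivity)] at this
  have h2 : (n : ℝ) / (n + 1) - 1 = - ((n : ℝ) + 1)⁻¹ := by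
    field_simp
    ring
  linarith

lemma aux_log_pos (n : ℕ) (hn : 2 ≤ n) : 0 < Real.log (n : ℝ) :=
  Real.log_pos (by exact_mod_cast hn)

lemma aux_low (κ : ℝ) (hκ : 0 < κ) (n : ℕ) (hn : 2 ≤ n) :
    Real.log n ^ (-κ) - Real.log ((n + 1 : ℕ) : ℝ) ^ (-κ) ≤
      κ * ((n : ℝ)⁻¹ * Real.log n ^ (-(1 + κ))) := by
  have h1 := aux_tangent κ (Real.log ((n + 1 : ℕ) : ℝ)) (Real.log n) hκ
    (aux_log_pos _ (by omega)) (aux_log_pos _ hn)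
  have hp : 0 < κ * Real.log n ^ (-(1 + κ)) := by
    have := aux_log_pos n hn
    positivity
  nlinarith [aux_log_succ_le n hn]

lemma aux_up (κ : ℝ) (hκ : 0 < κ) (n : ℕ) (hn : 2 ≤ n) :
    κ * (((n + 1 : ℕ) : ℝ)⁻¹ * Real.log ((n + 1 : ℕ) : ℝ) ^ (-(1 + κ))) ≤
    Real.log n ^ (-κ) - Real.log ((n + 1 : ℕ) : ℝ) ^ (-κ) := by
  have h1 := aux_tangent κ (Real.log n) (Real.log ((n + 1 : ℕ) : ℝ)) hκ
    (aux_log_pos _ hn) (aux_log_pos _ (by omega))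
  have hp : 0 < κ * Real.log ((n + 1 : ℕ) : ℝ) ^ (-(1 + κ)) := by
    have := aux_log_pos (n + 1) (by omega)
    positivity
  nlinarith [aux_le_log_succ n hn]

lemma aux_tail_low (κ c : ℝ) (hκ : 0 < κ) (hc : 0 < c) (N : ℕ) (hN : 2 ≤ N) (F : ℕ → ℝ≥0∞)
    (hF : ∀ n, N ≤ n → ENNReal.ofReal (c * ((n : ℝ)⁻¹ * Real.log n ^ (-(1 + κ)))) ≤ F n) :
    ENNReal.ofReal (c / κ * Real.log N ^ (-κ)) ≤ ∑' n, F n := by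
  have h1 : ∀ K : ℕ, ENNReal.ofReal
      (c / κ * (Real.log N ^ (-κ) - Real.log ((N + K : ℕ) : ℝ) ^ (-κ))) ≤
      ∑ k ∈ Finset.range K, F (N + k) := by
    intro K
    induction K with
    | zero => simp
    | succ K ih =>
      rw [Finset.sum_range_succ]
      refine le_trans ?_ (add_le_add ih (hF (N + K) (by omega)))
      refine le_trans (ENNReal.ofReal_le_ofReal ?_) ENNReal.ofReal_add_le
      have h2 := aux_low κ hκ (N + K) (by omega)
      have h3 := mul_le_mul_of_nonneg_left h2 (show 0 ≤ c / κ by positivity)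
      have h4 : c / κ * (κ * (((N + K : ℕ) : ℝ)⁻¹ * Real.log ((N + K : ℕ) : ℝ) ^ (-(1 + κ)))) =
        c * (((N + K : ℕ) : ℝ)⁻¹ * Real.log ((N + K : ℕ) : ℝ) ^ (-(1 + κ))) := by
        field_simp
      rw [h4] at h3
      rw [← add_assoc]
      linarith
  have h2 : ∀ K : ℕ, ENNReal.ofReal
      (c / κ * (Real.log N ^ (-κ) - Real.log ((N + K : ℕ) : ℝ) ^ (-κ))) ≤ ∑' n, F n := fun K =>
    (h1 K).trans ((ENNReal.sum_le_tsum _).trans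
      (ENNReal.tsum_comp_le_tsum_of_injective (add_right_injective N) F))
  have h3 : Tendsto (fun K : ℕ => Real.log ((N + K : ℕ) : ℝ) ^ (-κ)) atTop (nhds 0) :=
    (tendsto_rpow_neg_atTop hκ).comp (Real.tendsto_log_atTop.comp
      (tendsto_natCast_atTop_atTop.comp (tendsto_atTop_mono (fun K => by simp) tendsto_id)))
  have h4 : Tendsto (fun K : ℕ => ENNReal.ofReal
      (c / κ * (Real.log N ^ (-κ) - Real.log ((N + K : ℕ) : ℝ) ^ (-κ)))) atTop
      (nhds (ENNReal.ofReal (c / κ * (Real.log N ^ (-κ) - 0)))) :=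
    ENNReal.tendsto_ofReal ((tendsto_const_nhds.sub h3).const_mul _)
  rw [sub_zero] at h4
  exact le_of_tendsto' h4 h2

lemma aux_tail_up (κ c : ℝ) (hκ : 0 < κ) (hc : 0 < c) (m : ℕ) (hm : 2 ≤ m) (F : ℕ → ℝ≥0∞)
    (hF0 : ∀ n, n ≤ m → F n = 0)
    (hF : ∀ n, m < n → F n ≤ ENNReal.ofReal (c * ((n : ℝ)⁻¹ * Real.log n ^ (-(1 + κ))))) :
    ∑' n, F n ≤ ENNReal.ofReal (c / κ * Real.log m ^ (-κ)) := by
  have h1 : ∀ K : ℕ, ∑ k ∈ Finset.range (m + 1 + K), F k ≤ ENNReal.ofReal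
      (c / κ * (Real.log m ^ (-κ) - Real.log ((m + K : ℕ) : ℝ) ^ (-κ))) := by
    intro K
    induction K with
    | zero =>
      rw [Finset.sum_eq_zero]
      · simp
      · intro i hi
        exact hF0 i (by simp at hi; omega)
    | succ K ih =>
      rw [← add_assoc, Finset.sum_range_succ]
      refine (add_le_add ih (hF (m + 1 + K) (by omega))).trans ?_
      have h2 := aux_up κ hκ (m + K) (by omega)
      have h3 := mul_le_mul_of_nonneg_left h2 (show 0 ≤ c / κ by positivity)
      have h4 : c / κ * (κ * (((m + K + 1 : ℕ) : ℝ)⁻¹ *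
          Real.log ((m + K + 1 : ℕ) : ℝ) ^ (-(1 + κ)))) =
        c * (((m + K + 1 : ℕ) : ℝ)⁻¹ * Real.log ((m + K + 1 : ℕ) : ℝ) ^ (-(1 + κ))) := by
        field_simp
      rw [h4] at h3
      rw [show m + 1 + K = m + K + 1 by ring]
      have hl := aux_log_pos (m + K + 1) (by omega)
      rw [← ENNReal.ofReal_add _ (by positivity)]
      · apply ENNReal.ofReal_le_ofReal
        rw [← add_assoc]
        linarith
      · apply mul_nonneg (by positivity)
        rw [sub_nonneg]
        apply Real.rpow_le_rpow_of_nonpos (aux_log_pos m hm) _ (by linarith)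
        apply Real.log_le_log (by positivity)
        exact_mod_cast Nat.le_add_right m K
  refine ENNReal.tsum_le_of_sum_range_le fun K => ?_
  refine (Finset.sum_le_sum_of_subset (Finset.range_mono (show K ≤ m + 1 + K by omega))).trans
    ((h1 K).trans (ENNReal.ofReal_le_ofReal ?_))
  apply mul_le_mul_of_nonneg_left _ (by positivity)
  have := Real.rpow_nonneg (aux_log_pos (m + K) (by omega)).le (-κ)
  linarith

/-- Remark 3 after Theorem 6.2 of the paper: prescribing
`d_n = (2 log n + 2(1+κ) log log n + O(1))/ω` produces the heavy-tail estimate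
`Σ_{d_n > t} e^{-δ d_n} ≍ t^{-κ}` for `δ = ω/2`. -/
theorem stmt_10 (ω κ δ : ℝ) (hω : 2 < ω) (hκ : κ ∈ Set.Ioo (1/2 : ℝ) 1) (hδ : δ = ω / 2)
    (d : ℕ → ℝ) (M : ℝ) (hM : 0 ≤ M)
    (hd : ∀ n : ℕ, 3 ≤ n →
      |d n - (2 * Real.log n + 2 * (1 + κ) * Real.log (Real.log n)) / ω| ≤ M / ω) :
    ∃ c₁ c₂ t₀ : ℝ, 0 < c₁ ∧ c₁ ≤ c₂ ∧ 0 < t₀ ∧ ∀ t ≥ t₀,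
      ENNReal.ofReal (c₁ * t ^ (-κ)) ≤
        (∑' n : ℕ, if 3 ≤ n ∧ t < d n then ENNReal.ofReal (Real.exp (-δ * d n)) else 0) ∧
      (∑' n : ℕ, if 3 ≤ n ∧ t < d n then ENNReal.ofReal (Real.exp (-δ * d n)) else 0) ≤
        ENNReal.ofReal (c₂ * t ^ (-κ)) := by
  obtain ⟨hκ1, hκ2⟩ := hκ
  have hκ0 : 0 < κ := by linarith
  have hω0 : 0 < ω := by linarith
  subst hδ
  -- basic facts on each term
  have hlog1 : ∀ n : ℕ, 3 ≤ n → 1 ≤ Real.log n := by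
    intro n hn
    rw [Real.le_log_iff_exp_le (by positivity)]
    have : (3 : ℝ) ≤ n := by exact_mod_cast hn
    linarith [Real.exp_one_lt_d9]
  have hlo : ∀ n : ℕ, 3 ≤ n →
      2 * Real.log n + 2 * (1 + κ) * Real.log (Real.log n) - M ≤ ω * d n := by
    intro n hn
    have h := (abs_le.1 (hd n hn)).1
    have h2 := mul_le_mul_of_nonneg_left h hω0.le
    rw [mul_sub, mul_div_cancel₀ _ hω0.ne', mul_neg, mul_div_cancel₀ _ hω0.ne'] at h2
    linarith
  have hhi : ∀ n : ℕ, 3 ≤ n →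
      ω * d n ≤ 2 * Real.log n + 2 * (1 + κ) * Real.log (Real.log n) + M := by
    intro n hn
    have h := (abs_le.1 (hd n hn)).2
    have h2 := mul_le_mul_of_nonneg_left h hω0.le
    rw [mul_sub, mul_div_cancel₀ _ hω0.ne', mul_div_cancel₀ _ hω0.ne'] at h2
    linarith
  have hg : ∀ (n : ℕ) (a : ℝ), 3 ≤ n →
      Real.exp a * ((n : ℝ)⁻¹ * Real.log n ^ (-(1 + κ))) =
        Real.exp (a - Real.log n - (1 + κ) * Real.log (Real.log n)) := by
    intro n a hn
    have hl := hlog1 n hn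
    have hn0 : (0 : ℝ) < n := by positivity
    rw [Real.rpow_def_of_pos (by linarith)]
    nth_rewrite 1 [← Real.exp_log hn0]
    rw [← Real.exp_neg, ← Real.exp_add, ← Real.exp_add]
    congr 1
    ring
  have hLL : ∀ n : ℕ, 3 ≤ n → 0 ≤ Real.log (Real.log n) := fun n hn =>
    Real.log_nonneg (hlog1 n hn)
  have hLL2 : ∀ n : ℕ, 3 ≤ n → Real.log (Real.log n) ≤ Real.log n := fun n hn => by
    have := Real.log_le_sub_one_of_pos (x := Real.log n) (by linarith [hlog1 n hn])
    linarith
  have key : ∀ t ≥ M + 12,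
      ENNReal.ofReal (Real.exp (-M / 2) / κ * (2 * ω) ^ (-κ) * t ^ (-κ)) ≤
        (∑' n : ℕ, if 3 ≤ n ∧ t < d n then ENNReal.ofReal (Real.exp (-(ω / 2) * d n)) else 0) ∧
      (∑' n : ℕ, if 3 ≤ n ∧ t < d n then ENNReal.ofReal (Real.exp (-(ω / 2) * d n)) else 0) ≤
        ENNReal.ofReal (Real.exp (M / 2) / κ * (1 / 12) ^ (-κ) * t ^ (-κ)) := by
    intro t ht
    have ht0 : 0 < t := by linarith
    have hωt : 2 * t ≤ ω * t := by nlinarith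
    constructor
    · set N := ⌊Real.exp (ω * t)⌋₊ + 1 with hN
      have hN1 : Real.exp (ω * t) < N := by
        rw [hN]; push_cast; exact Nat.lt_floor_add_one _
      have hN2 : (N : ℝ) ≤ Real.exp (ω * t) + 1 := by
        rw [hN]; push_cast
        linarith [Nat.floor_le (Real.exp_pos (ω * t)).le]
      have hN3 : 3 ≤ N := by
        have h1 := Real.add_one_le_exp (ω * t)
        have : (3 : ℝ) < N := by linarith
        exact_mod_cast this.le
      have hN0 : (0 : ℝ) < N := by positivity
      have hlN : Real.log N ≤ 2 * ω * t := by
        rw [Real.log_le_iff_le_exp hN0]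
        have h1 := Real.add_one_le_exp (ω * t)
        have : Real.exp (2 * ω * t) = Real.exp (ω * t) * Real.exp (ω * t) := by
          rw [← Real.exp_add]; ring_nf
        rw [this]
        nlinarith
      refine le_trans (ENNReal.ofReal_le_ofReal ?_)
        (aux_tail_low κ (Real.exp (-M / 2)) hκ0 (Real.exp_pos _) N (by omega) _ ?_)
      · rw [mul_assoc, ← Real.mul_rpow (by positivity) ht0.le]
        apply mul_le_mul_of_nonneg_left _ (by positivity)
        exact Real.rpow_le_rpow_of_nonpos (aux_log_pos N (by omega)) hlN (by linarith)
      · intro n hn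
        have hn3 : 3 ≤ n := by omega
        have hln : ω * t < Real.log n := by
          rw [Real.lt_log_iff_exp_lt (by positivity)]
          exact lt_of_lt_of_le hN1 (by exact_mod_cast hn)
        have h1 := hlo n hn3
        have h2 := hLL n hn3
        have h3 : 0 ≤ 2 * (1 + κ) * Real.log (Real.log n) := by positivity
        have h4 : t < d n := by
          have : ω * t < ω * d n := by linarith
          exact lt_of_mul_lt_mul_left this hω0.le
        rw [if_pos ⟨hn3, h4⟩, hg n _ hn3]
        apply ENNReal.ofReal_le_ofReal
        apply Real.exp_le_exp.2
        linarith [hhi n hn3]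
    · set m := ⌊Real.exp (t / 6)⌋₊ with hm
      have hm1 : Real.exp (t / 6) < m + 1 := Nat.lt_floor_add_one _
      have hm2 : (m : ℝ) ≤ Real.exp (t / 6) := Nat.floor_le (Real.exp_pos _).le
      have he : Real.exp (t / 6) = Real.exp (t / 12) * Real.exp (t / 12) := by
        rw [← Real.exp_add]; ring_nf
      have he1 := Real.add_one_le_exp (t / 12)
      have hm3 : Real.exp (t / 12) ≤ m := by nlinarith
      have hm4 : 2 ≤ m := by
        have : (2 : ℝ) ≤ m := by linarith
        exact_mod_cast this
      have hlm : 1 / 12 * t ≤ Real.log m := by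
        rw [Real.le_log_iff_exp_le (by positivity)]
        refine le_trans (le_of_eq ?_) hm3
        ring_nf
      refine le_trans (aux_tail_up κ (Real.exp (M / 2)) hκ0 (Real.exp_pos _) m hm4 _ ?_ ?_)
        (ENNReal.ofReal_le_ofReal ?_)
      · intro n hn
        rw [if_neg]
        rintro ⟨hn3, htd⟩
        have h1 := hhi n hn3
        have h2 := hLL2 n hn3
        have h3 := hLL n hn3
        have h5 : ω * t < ω * d n := mul_lt_mul_of_pos_left htd hω0
        have h6 : 2 * (1 + κ) * Real.log (Real.log n) ≤ 4 * Real.log n := by nlinarith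
        have h7 : t / 6 < Real.log n := by linarith
        rw [Real.lt_log_iff_exp_lt (by positivity)] at h7
        have h8 : (n : ℝ) ≤ m := by exact_mod_cast hn
        linarith
      · intro n hn
        have hn3 : 3 ≤ n := by omega
        rw [hg n _ hn3]
        split_ifs with h
        · apply ENNReal.ofReal_le_ofReal
          apply Real.exp_le_exp.2
          linarith [hlo n hn3]
        · exact zero_le
      · rw [mul_assoc, ← Real.mul_rpow (by positivity) ht0.le]
        apply mul_le_mul_of_nonneg_left _ (by positivity)
        exact Real.rpow_le_rpow_of_nonpos (by positivity) hlm (by linarith)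
  refine ⟨Real.exp (-M / 2) / κ * (2 * ω) ^ (-κ), Real.exp (M / 2) / κ * (1 / 12) ^ (-κ), M + 12,
    by positivity, ?_, by linarith, key⟩
  apply mul_le_mul _ _ (by positivity) (by positivity)
  · apply div_le_div_of_nonneg_right _ hκ0.le
    apply Real.exp_le_exp.2
    linarith
  · exact Real.rpow_le_rpow_of_nonpos (by norm_num) (by linarith) (by linarith)
end

section
/- Let (d_n)_{n∈ℕ} be a family of nonnegative reals, δ > 0, κ ∈ (0,1), and let L be a slowly varying function. Assume there exist constants 0 < c₁ ≤ c₂ and t₀ > 0 such that c₁ L(t)/t^κ ≤ Σ_{n : d_n > t} e^{−δ d_n} ≤ c₂ L(t)/t^κ for all t ≥ t₀. Then Σ_n d_n e^{−δ d_n} = +∞. -/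
open Filter
open scoped ENNReal

/-- Remark 4 after Theorem 6.2 of the paper: the heavy-tail bounds
`c₁ L(t)/t^κ ≤ Σ_{d_n>t} e^{-δ d_n} ≤ c₂ L(t)/t^κ` with `κ < 1` force
`Σ_n d_n e^{-δ d_n} = ∞`. -/
theorem stmt_12 (d : ℕ → ℝ) (hd : ∀ n, 0 ≤ d n) (δ : ℝ) (hδ : 0 < δ)
    (κ : ℝ) (hκ : κ ∈ Set.Ioo (0:ℝ) 1)
    (L : ℝ → ℝ) (hLpos : ∀ t > 0, 0 < L t) (hLmeas : Measurable L)
    (hLslow : ∀ lam > 0, Tendsto (fun t => L (lam * t) / L t) atTop (nhds 1))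
    (c₁ c₂ t₀ : ℝ) (hc₁ : 0 < c₁) (hc : c₁ ≤ c₂) (ht₀ : 0 < t₀)
    (hbound : ∀ t ≥ t₀,
      ENNReal.ofReal (c₁ * (L t / t ^ κ)) ≤
        (∑' n : ℕ, if t < d n then ENNReal.ofReal (Real.exp (-δ * d n)) else 0) ∧
      (∑' n : ℕ, if t < d n then ENNReal.ofReal (Real.exp (-δ * d n)) else 0) ≤
        ENNReal.ofReal (c₂ * (L t / t ^ κ))) :
    (∑' n : ℕ, ENNReal.ofReal (d n * Real.exp (-δ * d n))) = ⊤ := by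
  obtain ⟨hκ0, hκ1⟩ := hκ
  set S := (∑' n : ℕ, ENNReal.ofReal (d n * Real.exp (-δ * d n))) with hS
  have key : ∀ t ≥ t₀, ENNReal.ofReal (c₁ * (L t * t ^ (1 - κ))) ≤ S := by
    intro t ht
    have htpos : 0 < t := lt_of_lt_of_le ht₀ ht
    have h1 : c₁ * (L t * t ^ (1 - κ)) = t * (c₁ * (L t / t ^ κ)) := by
      rw [Real.rpow_sub htpos, Real.rpow_one]
      ring
    rw [h1, ENNReal.ofReal_mul htpos.le]
    refine (mul_le_mul_right (hbound t ht).1 _).trans ?_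
    rw [← ENNReal.tsum_mul_left]
    refine ENNReal.tsum_le_tsum fun n => ?_
    split_ifs with h
    · rw [← ENNReal.ofReal_mul htpos.le]
      exact ENNReal.ofReal_le_ofReal (mul_le_mul_of_nonneg_right h.le (Real.exp_pos _).le)
    · simp
  set B : ℝ := (2:ℝ) ^ (1 - κ) with hB
  have hB1 : 1 < B := Real.one_lt_rpow (by norm_num) (by linarith)
  have hr : (1 + B) / 2 / B < 1 := by
    rw [div_lt_one (by linarith)]; linarith
  obtain ⟨T, hT⟩ := eventually_atTop.1 ((hLslow 2 (by norm_num)).eventually (lt_mem_nhds hr))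
  set a := max T t₀ with ha
  have hapos : 0 < a := lt_of_lt_of_le ht₀ (le_max_right _ _)
  have step : ∀ t ≥ a, (1 + B) / 2 * (L t * t ^ (1 - κ)) ≤ L (2 * t) * (2 * t) ^ (1 - κ) := by
    intro t ht
    have htpos : 0 < t := lt_of_lt_of_le hapos ht
    have h := hT t ((le_max_left _ _).trans ht)
    have hL := hLpos t htpos
    rw [lt_div_iff₀ hL, div_mul_eq_mul_div, div_lt_iff₀ (by linarith)] at h
    rw [Real.mul_rpow (by norm_num) htpos.le, ← hB]
    have hp : 0 < t ^ (1 - κ) := Real.rpow_pos_of_pos htpos _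
    nlinarith
  have hge : ∀ k : ℕ, a ≤ 2 ^ k * a := fun k =>
    le_mul_of_one_le_left hapos.le (one_le_pow₀ (by norm_num))
  have iter : ∀ k : ℕ, ((1 + B) / 2) ^ k * (L a * a ^ (1 - κ)) ≤
      L (2 ^ k * a) * (2 ^ k * a) ^ (1 - κ) := by
    intro k
    induction k with
    | zero => simp
    | succ k ih =>
      have h := step (2 ^ k * a) (hge k)
      rw [← mul_assoc 2, ← pow_succ'] at h
      refine le_trans ?_ h
      rw [pow_succ', mul_assoc]
      exact mul_le_mul_of_nonneg_left ih (by linarith)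
  have hg : 0 < L a * a ^ (1 - κ) := mul_pos (hLpos a hapos) (Real.rpow_pos_of_pos hapos _)
  have hlim : Tendsto (fun k : ℕ => c₁ * (((1 + B) / 2) ^ k * (L a * a ^ (1 - κ)))) atTop atTop :=
    ((tendsto_pow_atTop_atTop_of_one_lt (by linarith)).atTop_mul_const hg).const_mul_atTop hc₁
  refine top_le_iff.1 (le_of_tendsto' (ENNReal.tendsto_ofReal_atTop.comp hlim) fun k => ?_)
  refine le_trans (ENNReal.ofReal_le_ofReal ?_) (key (2 ^ k * a) ((le_max_right _ _).trans (hge k)))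
  exact mul_le_mul_of_nonneg_left (iter k) hc₁.le
end
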